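/- arXiv:1501.04958 — 2 statements merged into one kernel-verified Lean document; each statement's English description precedes it below -/
import Mathlib

section
/- Let T be a hyperbolic C₀-semigroup on X with Green function G(t) = −T(t)P_in for t ≥ 0 and G(t) = T_out(t)P_out for t < 0. Then for every bounded continuous y : ℝ → X, the function x = G∗y defined by x(t) = ∫_ℝ G(t−τ)y(τ)dτ is bounded continuous and satisfies x(t) − T(t−s)x(s) = −∫_s^t T(t−τ)y(τ)dτ for all s ≤ t. In particular 𝓛x = y, so 𝓛 is surjective on C_b(ℝ,X). -/
theorem aux_circle_clm {B : Type*} [NormedAddCommGroup B] [NormedSpace ℂ B] [CompleteSpace B]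
    (L : B →L[ℂ] B) (f : ℂ → B) (hf : CircleIntegrable f 0 1) :
    L (∮ z in C(0, 1), f z) = ∮ z in C(0, 1), L (f z) := by
  unfold circleIntegral
  rw [← ContinuousLinearMap.intervalIntegral_comp_comm L hf.out]
  simp

theorem aux_gap {K : Set ℂ} (hK : IsClosed K) (h : ∀ z ∈ Metric.sphere (0 : ℂ) 1, z ∉ K) :
    ∃ q : ℝ, 0 < q ∧ q < 1 ∧ ∀ z : ℂ, q ≤ ‖z‖ → ‖z‖ ≤ q⁻¹ → z ∉ K := by
  obtain ⟨δ, hδ, hsub⟩ := (isCompact_sphere (0 : ℂ) 1).exists_cthickening_subset_open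
    hK.isOpen_compl (fun z hz => h z hz)
  refine ⟨(1 + δ)⁻¹, by positivity, inv_lt_one_of_one_lt₀ (by linarith), fun z h1 h2 => ?_⟩
  rw [inv_inv] at h2
  have hz0 : 0 < ‖z‖ := lt_of_lt_of_le (by positivity) h1
  have h3 : 1 - δ ≤ ‖z‖ := by
    refine le_trans ?_ h1
    rw [← one_div, le_div_iff₀ (by positivity)]; nlinarith
  apply hsub
  have hzc : (‖z‖ : ℂ) ≠ 0 := by exact_mod_cast hz0.ne'
  refine Metric.mem_cthickening_of_dist_le z (z / ‖z‖) δ _ ?_ ?_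
  · simp [hz0.ne']
  · rw [dist_eq_norm]
    have : z - z / ‖z‖ = z / ‖z‖ * ((‖z‖ - 1 : ℝ) : ℂ) := by
      push_cast; field_simp
    rw [this, norm_mul, norm_div, Complex.norm_real, Complex.norm_real, Real.norm_eq_abs,
      Real.norm_eq_abs, abs_of_pos hz0, div_self hz0.ne', one_mul, abs_le]
    constructor <;> linarith

theorem aux_riesz {B : Type*} [NormedRing B] [NormedAlgebra ℂ B] [CompleteSpace B] (a : B)
    (hhyp : ∀ z ∈ Metric.sphere (0 : ℂ) 1, z ∉ spectrum ℂ a) (P : B)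
    (hP : P = (2 * (Real.pi : ℂ) * Complex.I)⁻¹ •
      ∮ z in C(0, 1), Ring.inverse (z • (1 : B) - a)) :
    (∀ c : B, Commute c a → Commute c P) ∧
    ∃ q C : ℝ, 0 < q ∧ q < 1 ∧ 0 ≤ C ∧ (∀ n : ℕ, ‖a ^ n * P‖ ≤ C * q ^ n) ∧
      ∃ b : ℕ → B, ∀ n, a ^ (n + 1) * b n = 1 - P ∧ ‖b n‖ ≤ C * q ^ n := by
  obtain ⟨q, hq0, hq1, hq⟩ := aux_gap (spectrum.isClosed (𝕜 := ℂ) a) hhyp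
  have hq1' : 1 < q⁻¹ := (one_lt_inv₀ hq0).2 hq1
  set R : ℂ → B := fun z => Ring.inverse (z • (1 : B) - a) with hR
  have hRu : ∀ z : ℂ, q ≤ ‖z‖ → ‖z‖ ≤ q⁻¹ → IsUnit (z • (1 : B) - a) := by
    intro z h1 h2
    have := hq z h1 h2
    rw [spectrum.notMem_iff, Algebra.algebraMap_eq_smul_one] at this
    exact this
  have hRd : ∀ z : ℂ, q ≤ ‖z‖ → ‖z‖ ≤ q⁻¹ → DifferentiableAt ℂ R z := by
    intro z h1 h2
    obtain ⟨u, hu⟩ := hRu z h1 h2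
    have h := differentiableAt_inverse (𝕜 := ℂ) (R := B) u.isUnit
    rw [hu] at h
    exact DifferentiableAt.fun_comp' (f := fun z : ℂ => z • (1 : B) - a) z h (by fun_prop)
  set A : Set ℂ := Metric.closedBall 0 q⁻¹ \ Metric.ball 0 q with hA
  have memA : ∀ z, z ∈ A ↔ ‖z‖ ≤ q⁻¹ ∧ q ≤ ‖z‖ := by intro z; simp [hA]
  have hAc : IsCompact A := (isCompact_closedBall _ _).diff Metric.isOpen_ball
  obtain ⟨M, hM⟩ := hAc.exists_bound_of_continuousOn (f := R)
    (fun z hz => (hRd z ((memA z).1 hz).2 ((memA z).1 hz).1).continuousAt.continuousWithinAt)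
  have hM0 : 0 ≤ M := le_trans (norm_nonneg _) (hM 1 ((memA 1).2 (by simp; exact ⟨hq1'.le, hq1.le⟩)))
  have hfd : ∀ (k : ℤ) (z : ℂ), z ∈ A → DifferentiableAt ℂ (fun z => z ^ k • R z) z := by
    intro k z hz
    rw [memA] at hz
    have hz0 : z ≠ 0 := by rintro rfl; simp at hz; linarith
    exact (differentiableAt_zpow.2 (Or.inl hz0)).smul (hRd z hz.2 hz.1)
  have hfc : ∀ (k : ℤ) (s : Set ℂ), s ⊆ A → ContinuousOn (fun z => z ^ k • R z) s :=
    fun k s hs z hz => (hfd k z (hs hz)).continuousAt.continuousWithinAt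
  have hS1 : Metric.sphere (0 : ℂ) 1 ⊆ A := by
    intro z hz; rw [memA]; simp at hz; rw [hz]; exact ⟨hq1'.le, hq1.le⟩
  have hint : ∀ k : ℤ, CircleIntegrable (fun z => z ^ k • R z) 0 1 :=
    fun k => (hfc k _ hS1).circleIntegrable zero_le_one
  set c : ℂ := 2 * (Real.pi : ℂ) * Complex.I with hc
  have hc0 : c ≠ 0 := by simp [hc, Real.pi_ne_zero]
  set J : ℤ → B := fun k => c⁻¹ • ∮ z in C(0, 1), z ^ k • R z with hJ
  have hPJ : P = J 0 := by rw [hP]; simp [hJ, hR]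
  -- deformation
  have hin : ∀ k, ‖J k‖ ≤ q * (q ^ k * M) := by
    intro k
    have : (∮ z in C(0, 1), z ^ k • R z) = ∮ z in C(0, q), z ^ k • R z := by
      refine Complex.circleIntegral_eq_of_differentiable_on_annulus_off_countable hq0 hq1.le
        Set.countable_empty (hfc k _ ?_) ?_
      · intro z hz; rw [memA]; simp at hz; exact ⟨by linarith [hz.1], hz.2⟩
      · intro z hz; apply hfd; rw [memA]; simp at hz; exact ⟨by linarith [hz.1], by linarith [hz.2]⟩
    simp only [hJ]; rw [this]
    refine circleIntegral.norm_two_pi_i_inv_smul_integral_le_of_norm_le_const hq0.le fun z hz => ?_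
    have hz' : ‖z‖ = q := by simpa using hz
    rw [norm_smul, norm_zpow, hz']
    have := hM z ((memA z).2 (by rw [hz']; constructor <;> linarith))
    gcongr
  have hout : ∀ k, ‖J k‖ ≤ q⁻¹ * (q⁻¹ ^ k * M) := by
    intro k
    have : (∮ z in C(0, q⁻¹), z ^ k • R z) = ∮ z in C(0, 1), z ^ k • R z := by
      refine Complex.circleIntegral_eq_of_differentiable_on_annulus_off_countable one_pos hq1'.le
        Set.countable_empty (hfc k _ ?_) ?_
      · intro z hz; rw [memA]; simp at hz; exact ⟨hz.1, by linarith [hz.2]⟩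
      · intro z hz; apply hfd; rw [memA]; simp at hz; exact ⟨by linarith [hz.1], by linarith [hz.2]⟩
    simp only [hJ]; rw [← this]
    refine circleIntegral.norm_two_pi_i_inv_smul_integral_le_of_norm_le_const (by positivity)
      fun z hz => ?_
    have hz' : ‖z‖ = q⁻¹ := by simpa using hz
    rw [norm_smul, norm_zpow, hz']
    have := hM z ((memA z).2 (by rw [hz']; constructor <;> linarith))
    gcongr
  -- recursion
  have hrec : ∀ k, a * J k = J (k + 1) - c⁻¹ • ((∮ z in C(0, 1), (z : ℂ) ^ k) • (1 : B)) := by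
    intro k
    simp only [hJ]
    rw [mul_smul_comm, ← smul_sub]
    congr 1
    have h1 := aux_circle_clm (ContinuousLinearMap.mul ℂ B a) _ (hint k)
    simp only [ContinuousLinearMap.mul_apply'] at h1
    rw [h1, ← circleIntegral.integral_smul_const, ← circleIntegral.integral_sub (hint _)]
    · refine circleIntegral.integral_congr zero_le_one fun z hz => ?_
      have hzA := (memA z).1 (hS1 hz)
      have hz0 : z ≠ 0 := by rintro rfl; simp at hz
      have h2 : (z • (1 : B) - a) * R z = 1 := Ring.mul_inverse_cancel _ (hRu z hzA.2 hzA.1)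
      rw [sub_mul, smul_mul_assoc, one_mul, sub_eq_iff_eq_add] at h2
      have h3 : a * R z = z • R z - 1 := by rw [h2]; abel
      rw [mul_smul_comm, h3, smul_sub, smul_smul, zpow_add_one₀ hz0]
    · refine ContinuousOn.circleIntegrable zero_le_one ?_
      intro z hz
      have hz0 : z ≠ 0 := by rintro rfl; simp at hz
      exact ((differentiableAt_zpow.2 (Or.inl hz0)).smul_const (1:B)).continuousAt.continuousWithinAt
  have hrec1 : ∀ k : ℤ, k ≠ -1 → a * J k = J (k + 1) := by
    intro k hk
    have := circleIntegral.integral_sub_zpow_of_ne hk 0 0 1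
    simp only [sub_zero] at this
    rw [hrec, this]; simp
  have hrec2 : a * J (-1) = P - 1 := by
    have := circleIntegral.integral_sub_center_inv (0 : ℂ) (R := 1) one_ne_zero
    simp only [sub_zero] at this
    rw [hrec, hPJ]; simp only [zpow_neg_one]; rw [this, smul_smul, ← hc, inv_mul_cancel₀ hc0]; simp
  refine ⟨?_, q, q⁻¹ * M, hq0, hq1, by positivity, ?_, fun n => -J (-1 - n), ?_⟩
  · intro d hd
    have hRc : ∀ z, z ∈ A → d * R z = R z * d := by
      intro z hz
      rw [memA] at hz
      obtain ⟨u, hu⟩ := hRu z hz.2 hz.1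
      have hdu : Commute d u := by
        rw [hu]
        exact ((Commute.one_right d).smul_right z).sub_right hd
      have : R z = ↑u⁻¹ := by simp only [hR]; rw [← hu]; exact Ring.inverse_unit u
      rw [this]
      exact hdu.units_inv_right
    have h1 := aux_circle_clm (ContinuousLinearMap.mul ℂ B d) _ (hint 0)
    have h2 := aux_circle_clm ((ContinuousLinearMap.mul ℂ B).flip d) _ (hint 0)
    simp only [ContinuousLinearMap.mul_apply', ContinuousLinearMap.flip_apply] at h1 h2
    rw [hPJ]
    change d * (c⁻¹ • _) = (c⁻¹ • _) * d
    rw [mul_smul_comm, smul_mul_assoc, h1, h2]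
    congr 1
    refine circleIntegral.integral_congr zero_le_one fun z hz => ?_
    simp [hRc z (hS1 hz)]
  · intro n
    have : a ^ n * P = J n := by
      induction n with
      | zero => simp [hPJ]
      | succ n ih => rw [pow_succ', mul_assoc, ih, hrec1 _ (by omega)]; simp
    rw [this]
    refine (hin n).trans ?_
    rw [zpow_natCast]
    have : q ≤ q⁻¹ := by linarith
    calc q * (q ^ n * M) ≤ q⁻¹ * (q ^ n * M) := by gcongr
      _ = _ := by ring
  · intro n
    constructor
    · induction n with
      | zero => simp [hrec2]
      | succ n ih =>
        rw [pow_succ, mul_assoc, mul_neg, hrec1 _ (by omega), ← ih]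
        congr 3; push_cast; ring
    · rw [norm_neg]
      refine (hout _).trans ?_
      have h1 : q⁻¹ * (q⁻¹ ^ (-1 - (n : ℤ)) * M) = 1 * M * q ^ n := by
        rw [zpow_sub₀ (by positivity), zpow_neg_one, zpow_natCast, inv_inv, inv_pow, div_inv_eq_mul]
        field_simp
      rw [h1]
      gcongr

theorem aux_bdd {X : Type*} [NormedAddCommGroup X] [NormedSpace ℂ X] [CompleteSpace X]
    (F : ℝ → X →L[ℂ] X) (K : Set ℝ) (hK : IsCompact K)
    (hF : ∀ x, ContinuousOn (fun t => F t x) K) : ∃ M, 0 ≤ M ∧ ∀ t ∈ K, ‖F t‖ ≤ M := by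
  obtain ⟨M, hM⟩ := banach_steinhaus (g := fun t : K => F t) (fun x => by
    obtain ⟨C, hC⟩ := hK.exists_bound_of_continuousOn (hF x)
    exact ⟨C, fun i => hC i i.2⟩)
  exact ⟨max M 0, le_max_right _ _, fun t ht => (hM ⟨t, ht⟩).trans (le_max_left _ _)⟩

theorem aux_cont {X : Type*} [NormedAddCommGroup X] [NormedSpace ℂ X] [CompleteSpace X]
    (F : ℝ → X →L[ℂ] X) (hF : ∀ x, Continuous (fun t => F t x)) (g : ℝ → X)
    (hg : Continuous g) : Continuous (fun t => F t (g t)) := by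
  rw [continuous_iff_continuousAt]
  intro t
  obtain ⟨M, hM0, hM⟩ := aux_bdd F (Set.Icc (t - 1) (t + 1)) isCompact_Icc
    (fun x => (hF x).continuousOn)
  have h1 : Filter.Tendsto (fun s => F s (g s - g t)) (nhds t) (nhds 0) := by
    have h2 : Filter.Tendsto (fun s => M * ‖g s - g t‖) (nhds t) (nhds 0) := by
      have : Continuous (fun s => M * ‖g s - g t‖) := by fun_prop
      simpa using this.tendsto t
    refine squeeze_zero_norm' ?_ h2
    filter_upwards [Icc_mem_nhds (show t - 1 < t by linarith) (show t < t + 1 by linarith)]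
      with s hs
    exact (F s).le_of_opNorm_le (hM s hs) _
  have h3 := h1.add ((hF (g t)).tendsto t)
  simpa [ContinuousAt] using h3

theorem aux_exp {a : ℝ} (ha : 0 < a) :
    MeasureTheory.Integrable (fun t : ℝ => Real.exp (-a * |t|)) := by
  rw [← MeasureTheory.integrableOn_univ, ← Set.Iic_union_Ioi (a := (0 : ℝ))]
  refine MeasureTheory.IntegrableOn.union ?_ ?_
  · refine (integrableOn_exp_mul_Iic ha 0).congr_fun (fun t ht => ?_) measurableSet_Iic
    simp only [abs_of_nonpos (Set.mem_Iic.1 ht)]; ring_nf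
  · refine (integrableOn_exp_mul_Ioi (neg_lt_zero.2 ha) 0).congr_fun (fun t ht => ?_)
      measurableSet_Ioi
    simp only [abs_of_pos (Set.mem_Ioi.1 ht)]

theorem aux_decay {X : Type*} [NormedAddCommGroup X] [NormedSpace ℂ X] [CompleteSpace X]
    (T : ℝ → X →L[ℂ] X)
    (hT0 : T 0 = 1)
    (hTadd : ∀ s t : ℝ, 0 ≤ s → 0 ≤ t → T (s + t) = T s * T t)
    (hTcont : ∀ x : X, ContinuousOn (fun t => T t x) (Set.Ici (0 : ℝ)))
    (P : X →L[ℂ] X)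
    (hcomm : ∀ c, Commute c (T 1) → Commute c P)
    (hr : ∃ q C : ℝ, 0 < q ∧ q < 1 ∧ 0 ≤ C ∧ (∀ n : ℕ, ‖T 1 ^ n * P‖ ≤ C * q ^ n) ∧
      ∃ b : ℕ → (X →L[ℂ] X), ∀ n, T 1 ^ (n + 1) * b n = 1 - P ∧ ‖b n‖ ≤ C * q ^ n)
    (S : ℝ → X →L[ℂ] X)
    (hScont : ∀ x : X, Continuous fun t => S t x)
    (hST : ∀ t : ℝ, 0 ≤ t → S t * (1 - P) = T t * (1 - P))
    (hSgrp : ∀ s t : ℝ, S (s + t) * (1 - P) = S s * (S t * (1 - P)))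
    (G : ℝ → X →L[ℂ] X)
    (hG : ∀ t : ℝ, G t = if 0 ≤ t then -(T t * P) else S t * (1 - P)) :
    ∃ K a : ℝ, 0 ≤ K ∧ 0 < a ∧ ∀ t, ‖G t‖ ≤ K * Real.exp (-a * |t|) := by
  obtain ⟨q, C, hq0, hq1, hC, hP, b, hb⟩ := hr
  have hTn : ∀ n : ℕ, T n = T 1 ^ n := by
    intro n
    induction n with
    | zero => simp [hT0]
    | succ n ih => push_cast; rw [hTadd _ _ (by positivity) zero_le_one, ih, pow_succ]
  have hPA : ∀ n : ℕ, T 1 ^ n * P = P * T 1 ^ n := fun n =>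
    (hcomm _ ((Commute.refl _).pow_left n))
  have hPQ : P * (1 - P) = 0 := by
    have h : ∀ n : ℕ, ‖P * (1 - P)‖ ≤ C * C * q ^ n := by
      intro n
      rw [← (hb n).1, ← mul_assoc, ← hPA]
      calc _ ≤ ‖T 1 ^ (n + 1) * P‖ * ‖b n‖ := norm_mul_le _ _
        _ ≤ (C * q ^ (n + 1)) * (C * q ^ n) := by
            gcongr
            · exact hP _
            · exact (hb n).2
        _ ≤ (C * 1) * (C * q ^ n) := by
            gcongr; exact pow_le_one₀ hq0.le hq1.le
        _ = _ := by ring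
    have hl : Filter.Tendsto (fun n : ℕ => C * C * q ^ n) Filter.atTop (nhds 0) := by
      simpa using (tendsto_pow_atTop_nhds_zero_of_lt_one hq0.le hq1).const_mul (C * C)
    have := ge_of_tendsto' hl h
    exact norm_le_zero_iff.1 this
  set Q := 1 - P with hQ
  have hQQ : Q * Q = Q := by
    conv_lhs => enter [1]; rw [hQ]
    rw [sub_mul, hPQ, one_mul, sub_zero]
  have hQA : ∀ n : ℕ, T 1 ^ n * Q = Q * T 1 ^ n := fun n => by
    rw [hQ, mul_sub, sub_mul, hPA, mul_one, one_mul]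
  have hSn : ∀ n : ℕ, S (-((n : ℝ) + 1)) * Q = Q * b n := by
    intro n
    have e1 : Q = T ((n : ℝ) + 1) * Q * b n := by
      have := hTn (n + 1)
      push_cast at this
      rw [this, hQA, mul_assoc, (hb n).1, hQQ]
    have h0 : S 0 * Q = Q := by rw [hST 0 le_rfl, hT0, one_mul]
    calc S (-((n : ℝ) + 1)) * Q = S (-((n : ℝ) + 1)) * (S ((n : ℝ) + 1) * Q) * b n := by
          rw [hST ((n : ℝ) + 1) (by positivity), mul_assoc, ← e1]
      _ = Q * b n := by rw [← hSgrp, neg_add_cancel, h0]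
  obtain ⟨M, hM0, hM⟩ := aux_bdd T (Set.Icc 0 1) isCompact_Icc
    (fun x => (hTcont x).mono Set.Icc_subset_Ici_self)
  obtain ⟨N, hN0, hN⟩ := aux_bdd S (Set.Icc 0 1) isCompact_Icc
    (fun x => (hScont x).continuousOn)
  set a := -Real.log q with ha
  have ha0 : 0 < a := by have := Real.log_neg hq0 hq1; linarith
  have hqn : ∀ t : ℝ, 0 ≤ t → q ^ (⌊t⌋₊) ≤ Real.exp a * Real.exp (-a * t) := by
    intro t ht
    rw [← Real.exp_add]
    have : q = Real.exp (-a) := by rw [ha, neg_neg, Real.exp_log hq0]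
    conv_lhs => rw [this]
    rw [← Real.exp_nat_mul, Real.exp_le_exp]
    have := Nat.lt_floor_add_one t
    nlinarith
  refine ⟨(M * C + N * ‖Q‖ * C) * Real.exp a, a, by positivity, ha0, fun t => ?_⟩
  rw [hG]
  split_ifs with ht
  · rw [norm_neg, abs_of_nonneg ht]
    have hfl := Nat.floor_le ht
    have hfl2 := Nat.lt_floor_add_one t
    have e : T t * P = T (t - ⌊t⌋₊) * (T 1 ^ ⌊t⌋₊ * P) := by
      rw [← mul_assoc, ← hTn, ← hTadd _ _ (by linarith) (by positivity), sub_add_cancel]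
    rw [e]
    calc _ ≤ ‖T (t - ⌊t⌋₊)‖ * ‖T 1 ^ ⌊t⌋₊ * P‖ := norm_mul_le _ _
      _ ≤ M * (C * q ^ ⌊t⌋₊) := by
          gcongr
          · exact hM _ ⟨by linarith, by linarith⟩
          · exact hP _
      _ ≤ M * (C * (Real.exp a * Real.exp (-a * t))) := by gcongr; exact hqn t ht
      _ ≤ M * (C * (Real.exp a * Real.exp (-a * t)))
          + N * ‖Q‖ * C * (Real.exp a * Real.exp (-a * t)) := le_add_of_nonneg_right (by positivity)
      _ = _ := by ring
  · push Not at ht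
    rw [abs_of_neg ht]
    have ht' : 0 ≤ -t := by linarith
    have hfl := Nat.floor_le ht'
    have hfl2 := Nat.lt_floor_add_one (-t)
    have e : S t * Q = S (t + (⌊-t⌋₊ + 1)) * (Q * b ⌊-t⌋₊) := by
      rw [← hSn, ← hSgrp, add_neg_cancel_right]
    rw [e]
    calc _ ≤ ‖S (t + (⌊-t⌋₊ + 1))‖ * (‖Q‖ * ‖b ⌊-t⌋₊‖) :=
          (norm_mul_le _ _).trans (by gcongr; exact norm_mul_le _ _)
      _ ≤ N * (‖Q‖ * (C * q ^ ⌊-t⌋₊)) := by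
          gcongr
          · exact hN _ ⟨by linarith, by linarith⟩
          · exact (hb _).2
      _ ≤ N * (‖Q‖ * (C * (Real.exp a * Real.exp (-a * -t)))) := by gcongr; exact hqn _ ht'
      _ ≤ M * (C * (Real.exp a * Real.exp (-a * -t))) + N * (‖Q‖ * (C * (Real.exp a * Real.exp (-a * -t)))) :=
          le_add_of_nonneg_left (by positivity)
      _ = _ := by ring


open ContinuousLinearMap in
/-- Surjectivity of the mild parabolic operator for a hyperbolic semigroup:
`x = G∗y` is a bounded continuous function with `𝓛x = y`. -/
theorem stmt13 {X : Type*} [NormedAddCommGroup X] [NormedSpace ℂ X] [CompleteSpace X]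
    (T : ℝ → X →L[ℂ] X)
    (hT0 : T 0 = 1)
    (hTadd : ∀ s t : ℝ, 0 ≤ s → 0 ≤ t → T (s + t) = T s ∘L T t)
    (hTcont : ∀ x : X, ContinuousOn (fun t => T t x) (Set.Ici (0 : ℝ)))
    (hhyp : ∀ z ∈ Metric.sphere (0 : ℂ) 1, z ∉ spectrum ℂ (T 1))
    (P : X →L[ℂ] X)
    (hP : P = (2 * (Real.pi : ℂ) * Complex.I)⁻¹ •
      ∮ z in C(0, 1), Ring.inverse (z • (1 : X →L[ℂ] X) - T 1))
    (S : ℝ → X →L[ℂ] X)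
    (hScont : ∀ x : X, Continuous fun t => S t x)
    (hScomm : ∀ t : ℝ, S t ∘L (1 - P) = (1 - P) ∘L S t)
    (hST : ∀ t : ℝ, 0 ≤ t → S t ∘L (1 - P) = T t ∘L (1 - P))
    (hSgrp : ∀ s t : ℝ, S (s + t) ∘L (1 - P) = S s ∘L (S t ∘L (1 - P)))
    (hSinv : ∀ t : ℝ, S t ∘L (S (-t) ∘L (1 - P)) = 1 - P)
    (G : ℝ → X →L[ℂ] X)
    (hG : ∀ t : ℝ, G t = if 0 ≤ t then -(T t ∘L P) else S t ∘L (1 - P))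
    (y : ℝ → X) (hy : Continuous y) (hyb : ∃ C, ∀ t, ‖y t‖ ≤ C)
    (x : ℝ → X) (hx : ∀ t : ℝ, x t = ∫ τ : ℝ, G (t - τ) (y τ)) :
    Continuous x ∧ (∃ C, ∀ t, ‖x t‖ ≤ C) ∧
      ∀ s t : ℝ, s ≤ t →
        x t - T (t - s) (x s) = -∫ τ in s..t, T (t - τ) (y τ) := by
  obtain ⟨hcomm, hr⟩ := aux_riesz (T 1) hhyp P hP
  obtain ⟨K, a, hK, ha, hdec⟩ := aux_decay T hT0 hTadd hTcont P hcomm hr S hScont hST hSgrp G hG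
  obtain ⟨Cy, hCy⟩ := hyb
  have hCy0 : 0 ≤ Cy := (norm_nonneg _).trans (hCy 0)
  have hx' : ∀ t, x t = ∫ u : ℝ, G u (y (t - u)) := by
    intro t
    rw [hx, ← MeasureTheory.integral_sub_left_eq_self (fun u => G u (y (t - u))) _ t]
    simp
  -- the two strongly continuous branches of the Green function
  have hT' : ∀ v, Continuous (fun t => (T |t|) v) := by
    intro v
    exact (hTcont v).comp_continuous continuous_abs (fun t => abs_nonneg t)
  have hmeas : ∀ w : ℝ → X, Continuous w →
      MeasureTheory.AEStronglyMeasurable (fun u => G u (w u)) := by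
    intro w hw
    have h1 : Continuous (fun u => -(T |u|) (P (w u))) :=
      (aux_cont (fun u => T |u|) hT' _ (P.continuous.comp hw)).neg
    have h2 : Continuous (fun u => (S u) ((1 - P) (w u))) :=
      aux_cont S hScont _ ((1 - P).continuous.comp hw)
    have h3 : MeasureTheory.StronglyMeasurable (fun u : ℝ => if 0 ≤ u then -(T |u|) (P (w u))
        else (S u) ((1 - P) (w u))) := MeasureTheory.StronglyMeasurable.ite (measurableSet_Ici (a := (0 : ℝ)))
      h1.stronglyMeasurable h2.stronglyMeasurable
    refine MeasureTheory.StronglyMeasurable.aestronglyMeasurable ?_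
    convert h3 using 2 with u
    rw [hG]
    by_cases hu : 0 ≤ u
    · simp [hu, abs_of_nonneg hu]
    · simp [hu]
  have hbd : ∀ u v, ‖v‖ ≤ Cy → ‖G u v‖ ≤ K * Real.exp (-a * |u|) * Cy := by
    intro u v hv
    exact ((G u).le_opNorm v).trans (by gcongr; exact hdec u)
  have hbi : MeasureTheory.Integrable (fun u : ℝ => K * Real.exp (-a * |u|) * Cy) :=
    ((aux_exp ha).const_mul K).mul_const Cy
  have hint' : ∀ t, MeasureTheory.Integrable (fun u => G u (y (t - u))) := fun t =>
    hbi.mono' (hmeas _ (by fun_prop)) (Filter.Eventually.of_forall fun u => hbd u _ (hCy _))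
  have hint : ∀ t, MeasureTheory.Integrable (fun τ => G (t - τ) (y τ)) := by
    intro t
    have := (hint' t).comp_sub_left t
    simpa using this
  refine ⟨?_, ⟨∫ u, K * Real.exp (-a * |u|) * Cy, fun t => ?_⟩, fun s t hst => ?_⟩
  · have : x = fun t => ∫ u : ℝ, G u (y (t - u)) := funext hx'
    rw [this]
    refine MeasureTheory.continuous_of_dominated (fun t => hmeas _ (by fun_prop))
      (fun t => Filter.Eventually.of_forall fun u => hbd u _ (hCy _)) hbi
      (Filter.Eventually.of_forall fun u => by fun_prop)
  · rw [hx']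
    exact MeasureTheory.norm_integral_le_of_norm_le hbi
      (Filter.Eventually.of_forall fun u => hbd u _ (hCy _))
  · have hts : 0 ≤ t - s := sub_nonneg.2 hst
    rw [hx t, hx s, ← ContinuousLinearMap.integral_comp_comm _ (hint s),
      ← MeasureTheory.integral_sub (hint t) ((T (t - s)).integrable_comp (hint s)),
      intervalIntegral.integral_of_le hst, ← MeasureTheory.integral_neg,
      ← MeasureTheory.integral_indicator measurableSet_Ioc]
    congr 1
    funext τ
    have hTS : ∀ r, T (t - s) ∘L (S r ∘L (1 - P)) = S (t - s + r) ∘L (1 - P) := by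
      intro r
      rw [hScomm r, ← ContinuousLinearMap.comp_assoc, ← hST _ hts, ContinuousLinearMap.comp_assoc,
        ← hScomm r, ← hSgrp]
    by_cases h1 : τ ≤ s
    · have h0 : τ ∉ Set.Ioc s t := fun h => absurd h.1 (not_lt.2 h1)
      rw [Set.indicator_of_notMem h0, hG, hG, if_pos (by linarith), if_pos (by linarith)]
      have : t - τ = (t - s) + (s - τ) := by ring
      rw [this, hTadd _ _ hts (by linarith)]
      simp
    · push Not at h1
      have e2 : T (t - s) (G (s - τ) (y τ)) = (S (t - τ) ∘L (1 - P)) (y τ) := by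
        rw [hG, if_neg (by linarith), ← ContinuousLinearMap.comp_apply, hTS]
        congr 3; ring
      rw [e2]
      by_cases h2 : τ ≤ t
      · have h0 : τ ∈ Set.Ioc s t := ⟨h1, h2⟩
        rw [Set.indicator_of_mem h0, hG, if_pos (by linarith), hST _ (by linarith)]
        simp only [neg_apply, comp_apply, sub_apply, map_sub]
        abel
      · have h0 : τ ∉ Set.Ioc s t := fun h => h2 h.2
        rw [Set.indicator_of_notMem h0, hG, if_neg (by linarith), sub_self]
end

section
/- Let 𝓧 be a nondegenerate Banach L¹(ℝ)-module and let x ∈ 𝓧 have empty Beurling spectrum Λ(x) = ∅. Then x = 0. -/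
open MeasureTheory

/-- The Fourier transform `f̂(λ) = ∫ f(t)e^{−itλ}dt`. -/
noncomputable def fhat (f : ℝ → ℂ) (l : ℝ) : ℂ :=
  ∫ t : ℝ, f t * Complex.exp (-(Complex.I * t * l))

/-- The Beurling spectrum of `x` with respect to a module action `act` of `L¹(ℝ)`:
the complement of `{λ : ∃ f ∈ L¹, f̂(λ) ≠ 0 ∧ fx = 0}`. -/
def BeurlingSpectrum {𝓧 : Type*} [NormedAddCommGroup 𝓧] [NormedSpace ℂ 𝓧]
    (act : (ℝ → ℂ) → 𝓧 → 𝓧) (x : 𝓧) : Set ℝ :=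
  {l : ℝ | ∃ f : ℝ → ℂ, Integrable f ∧ fhat f l ≠ 0 ∧ act f x = 0}ᶜ


open scoped FourierTransform SchwartzMap Convolution ContDiff Topology Manifold

/-- modulus of continuity -/
noncomputable def omg (V : ℝ → ℂ) (h : ℝ) : ℝ := ∫ u : ℝ, ‖V (u - h) - V u‖

theorem omg_cont {V : ℝ → ℂ} (hV : Integrable V) : Continuous (omg V) := by
  have hm : MemLp V 1 volume := memLp_one_iff_integrable.2 hV
  let F : Lp ℂ 1 (volume : Measure ℝ) := hm.toLp V
  have hmp : ∀ h : ℝ, MeasurePreserving (fun u : ℝ => u - h) volume volume :=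
    fun h => measurePreserving_sub_right volume h
  let g : ℝ → C(ℝ, ℝ) := fun h => ⟨fun u => u - h, by fun_prop⟩
  have hg : Continuous g := by
    apply ContinuousMap.continuous_of_continuous_uncurry
    show Continuous (fun p : ℝ × ℝ => p.2 - p.1)
    fun_prop
  have hc : Continuous (fun h => Lp.compMeasurePreserving (g h) (hmp h) F) :=
    Continuous.compMeasurePreservingLp continuous_const hg _ (by simp)
  have : omg V = fun h => ‖Lp.compMeasurePreserving (g h) (hmp h) F - F‖ := by
    ext h
    rw [L1.norm_eq_integral_norm]
    apply integral_congr_ae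
    have h1 := Lp.coeFn_compMeasurePreserving F (hmp h)
    have h2 := hm.coeFn_toLp
    have h3 := (hmp h).quasiMeasurePreserving.ae_eq_comp h2
    filter_upwards [Lp.coeFn_sub (Lp.compMeasurePreserving (g h) (hmp h) F) F, h1, h2, h3]
      with u e0 e1 e2 e3
    rw [e0]
    simp only [Pi.sub_apply]
    have e1' : (Lp.compMeasurePreserving (g h) (hmp h) F) u = (F ∘ fun u => u - h) u := e1
    rw [e1']
    have e3' : (F ∘ fun u => u - h) u = V (u - h) := e3
    rw [e3']
    have e2' : F u = V u := e2
    rw [e2']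
  rw [this]
  fun_prop

theorem omg_bound {V : ℝ → ℂ} (hV : Integrable V) (h : ℝ) : ‖omg V h‖ ≤ 2 * ∫ u, ‖V u‖ := by
  have h0 : 0 ≤ omg V h := integral_nonneg fun _ => norm_nonneg _
  rw [Real.norm_of_nonneg h0]
  calc omg V h ≤ ∫ u, (‖V (u - h)‖ + ‖V u‖) := by
        apply integral_mono ((hV.comp_sub_right h).sub hV).norm ((hV.comp_sub_right h).norm.add hV.norm)
        intro u; exact norm_sub_le _ _
    _ = _ := by
        rw [integral_add (hV.comp_sub_right h).norm hV.norm,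
          integral_sub_right_eq_self (fun u => ‖V u‖) h]; ring

theorem omg_tendsto {f V : ℝ → ℂ} (hf : Integrable f) (hV : Integrable V) :
    Filter.Tendsto (fun e : ℝ => ∫ s, ‖f s‖ * omg V (e * s)) (𝓝 0) (𝓝 0) := by
  have hc := omg_cont hV
  have h0 : omg V 0 = 0 := by simp [omg]
  have key : Filter.Tendsto (fun e : ℝ => ∫ s, ‖f s‖ * omg V (e * s)) (𝓝 0)
      (𝓝 (∫ s : ℝ, ‖f s‖ * 0)) := by
    apply tendsto_integral_filter_of_dominated_convergence
      (fun s => ‖f s‖ * (2 * ∫ u, ‖V u‖))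
    · refine Filter.Eventually.of_forall fun e => ?_
      exact hf.norm.aestronglyMeasurable.mul
        (by fun_prop : Continuous fun s => omg V (e * s)).aestronglyMeasurable
    · refine Filter.Eventually.of_forall fun e => Filter.Eventually.of_forall fun s => ?_
      rw [norm_mul, norm_norm]
      exact mul_le_mul_of_nonneg_left (omg_bound hV _) (norm_nonneg _)
    · exact hf.norm.mul_const _
    · refine Filter.Eventually.of_forall fun s => ?_
      apply Filter.Tendsto.const_mul
      have : Continuous fun e => omg V (e * s) := by fun_prop
      have := this.tendsto 0
      simpa [h0] using this
  simpa using key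

theorem diff_bound {f V : ℝ → ℂ} (hf : Integrable f) (hV : Integrable V) (e : ℝ) :
    ∫ t, ‖∫ s, f s * (V (t - e * s) - V t)‖ ≤ ∫ s, ‖f s‖ * omg V (e * s) := by
  have hi1 : Integrable (fun p : ℝ × ℝ => f p.1 * V p.2) (volume.prod volume) := hf.mul_prod hV
  have hmp : MeasurePreserving (fun p : ℝ × ℝ => (p.1, p.2 - e * p.1))
      (volume.prod volume) (volume.prod volume) := by
    apply MeasurePreserving.skew_product (f := id) (g := fun s t => t - e * s)
      (MeasurePreserving.id volume)
    · fun_prop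
    · exact Filter.Eventually.of_forall fun s =>
        (measurePreserving_sub_right volume (e * s)).map_eq
  have hi2 : Integrable (fun p : ℝ × ℝ => f p.1 * V (p.2 - e * p.1)) (volume.prod volume) :=
    hmp.integrable_comp_of_integrable hi1
  have hi : Integrable (fun p : ℝ × ℝ => f p.1 * (V (p.2 - e * p.1) - V p.2))
      (volume.prod volume) := by
    refine (hi2.sub hi1).congr (Filter.Eventually.of_forall fun p => ?_)
    simp [mul_sub]
  calc ∫ t, ‖∫ s, f s * (V (t - e * s) - V t)‖
      ≤ ∫ t, ∫ s, ‖f s * (V (t - e * s) - V t)‖ := by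
        apply integral_mono_of_nonneg (Filter.Eventually.of_forall fun t => norm_nonneg _)
        · exact hi.norm.swap.integral_prod_left
        · exact Filter.Eventually.of_forall fun t => norm_integral_le_integral_norm _
    _ = ∫ s, ∫ t, ‖f s * (V (t - e * s) - V t)‖ := by
        exact integral_integral_swap (f := fun t s => ‖f s * (V (t - e * s) - V t)‖) hi.norm.swap
    _ = _ := by
        apply integral_congr_ae
        refine Filter.Eventually.of_forall fun s => ?_
        simp only [norm_mul, integral_const_mul, omg]

theorem exists_chi : ∃ V : ℝ → ℂ, Integrable V ∧ ∫ t, V t = 1 ∧ ∀ (ξ e : ℝ), 0 < e →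
    ∃ φ : 𝓢(ℝ, ℂ), HasCompactSupport φ ∧ (∀ y ∈ Metric.ball ξ e, φ y = 1) ∧
      ∀ t, 𝓕⁻ φ t = e * Complex.exp (2 * Real.pi * Complex.I * ξ * t) * V (e * t) := by
  let b : ContDiffBump (0 : ℝ) := ⟨1, 2, by norm_num, by norm_num⟩
  have hb2 : HasCompactSupport (fun y => (b y : ℂ)) :=
    b.hasCompactSupport.comp_left (g := fun r : ℝ => (r : ℂ)) rfl
  have hb1 : ContDiff ℝ ∞ (fun y => (b y : ℂ)) := Complex.ofRealCLM.contDiff.comp b.contDiff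
  let c : 𝓢(ℝ, ℂ) := hb2.toSchwartzMap hb1
  refine ⟨fun t => 𝓕⁻ c t, (𝓕⁻ c).integrable, ?_, ?_⟩
  · have h1 : 𝓕 (𝓕⁻ c) 0 = 1 := by
      rw [FourierTransform.fourier_fourierInv_eq]
      show (b 0 : ℂ) = 1
      rw [b.one_of_mem_closedBall (by simp [b])]; simp
    rw [SchwartzMap.fourier_coe, Real.fourier_eq'] at h1
    simpa using h1
  · intro ξ e he
    let A : ℝ ≃ₜ ℝ := (Homeomorph.subRight ξ).trans (Homeomorph.mulLeft₀ e⁻¹ (by positivity))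
    have hA : ∀ y, A y = e⁻¹ * (y - ξ) := fun y => rfl
    have h2 : HasCompactSupport (fun y => (b (e⁻¹ * (y - ξ)) : ℂ)) :=
      hb2.comp_homeomorph A
    have h1 : ContDiff ℝ ∞ (fun y => (b (e⁻¹ * (y - ξ)) : ℂ)) :=
      hb1.comp (g := fun y => (b y : ℂ)) (f := fun y => e⁻¹ * (y - ξ)) (by fun_prop)
    refine ⟨h2.toSchwartzMap h1, h2, ?_, ?_⟩
    · intro y hy
      show (b (e⁻¹ * (y - ξ)) : ℂ) = 1
      rw [b.one_of_mem_closedBall]; · simp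
      rw [mem_closedBall_zero_iff, norm_mul, norm_inv, Real.norm_of_nonneg he.le,
        inv_mul_le_iff₀ he]
      rw [mem_ball_iff_norm] at hy
      show _ ≤ e * 1
      linarith
    · intro t
      beta_reduce
      rw [SchwartzMap.fourierInv_coe, SchwartzMap.fourierInv_coe, Real.fourierInv_eq',
        Real.fourierInv_eq']
      show ∫ v : ℝ, Complex.exp (↑(2 * Real.pi * inner ℝ v t) * Complex.I) •
        (b (e⁻¹ * (v - ξ)) : ℂ) = _ * ∫ v : ℝ, Complex.exp (↑(2 * Real.pi * inner ℝ v (e * t)) * Complex.I) •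
        (b v : ℂ)
      rw [← integral_add_right_eq_self _ ξ]
      have := Measure.integral_comp_mul_left (fun v : ℝ => Complex.exp (↑(2 * Real.pi * inner ℝ (v + ξ) t) * Complex.I) •
        (b (e⁻¹ * (v + ξ - ξ)) : ℂ)) e
      rw [abs_of_pos (by positivity), eq_comm, inv_smul_eq_iff₀ he.ne'] at this
      rw [this, ← integral_const_mul, ← integral_smul]
      apply integral_congr_ae
      refine Filter.Eventually.of_forall fun v => ?_
      simp only [add_sub_cancel_right, inv_mul_cancel_left₀ he.ne', smul_eq_mul,
        Complex.real_smul]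
      rw [mul_assoc, mul_assoc, ← mul_assoc (Complex.exp _) (Complex.exp _), ← Complex.exp_add]
      congr 3
      simp only [RCLike.inner_apply, conj_trivial]
      push_cast
      ring

theorem conv_schwartz (φ ψ : 𝓢(ℝ, ℂ)) (h : ∀ y, φ y * ψ y = ψ y) (t : ℝ) :
    ∫ s, (𝓕⁻ φ) (t - s) * (𝓕⁻ ψ) s = (𝓕⁻ ψ) t := by
  have h1 : SchwartzMap.convolution (ContinuousLinearMap.mul ℂ ℂ) (𝓕⁻ φ) (𝓕⁻ ψ) = 𝓕⁻ ψ := by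
    have : 𝓕 (SchwartzMap.convolution (ContinuousLinearMap.mul ℂ ℂ) (𝓕⁻ φ) (𝓕⁻ ψ)) = ψ := by
      rw [SchwartzMap.fourier_convolution]
      ext y
      simp [h]
    have h3 := congrArg (fun q : 𝓢(ℝ, ℂ) => 𝓕⁻ q) this
    simpa only [FourierTransform.fourierInv_fourier_eq] using h3
  have h2 := SchwartzMap.convolution_apply (ContinuousLinearMap.mul ℂ ℂ) (𝓕⁻ φ) (𝓕⁻ ψ) t
  rw [h1] at h2
  rw [h2, convolution_def,
    ← integral_sub_left_eq_self _ _ t]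
  simp

theorem conv_comm (f g : ℝ → ℂ) :
    (fun t => ∫ s : ℝ, f (t - s) * g s) = (fun t => ∫ s : ℝ, g (t - s) * f s) := by
  ext t
  rw [← integral_sub_left_eq_self _ _ t]
  simp [mul_comm]

theorem conv_int {f g : ℝ → ℂ} (hf : Integrable f) (hg : Integrable g) :
    Integrable (fun t => ∫ s : ℝ, f (t - s) * g s) := by
  rw [conv_comm]
  have := hf.integrable_convolution (ContinuousLinearMap.mul ℂ ℂ) hg
  refine this.congr (Filter.Eventually.of_forall fun t => ?_)
  simp [convolution_def, mul_comm]

theorem local_est {f V : ℝ → ℂ} (hf : Integrable f) (hV : Integrable V) (ξ e : ℝ) (he : 0 < e)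
    (W : ℝ → ℂ) (hW : ∀ t, W t = e * Complex.exp (2 * Real.pi * Complex.I * ξ * t) * V (e * t))
    (hWi : Integrable W) :
    ∫ t, ‖(∫ s, f (t - s) * W s) - 𝓕 f ξ * W t‖ ≤ ∫ s, ‖f s‖ * omg V (e * s) := by
  let E : ℝ → ℂ := fun s => Complex.exp (↑(-(2 * Real.pi * s * ξ)) * Complex.I)
  have hE : ∀ s, ‖E s‖ = 1 := fun s => Complex.norm_exp_ofReal_mul_I _
  let f' : ℝ → ℂ := fun s => E s * f s
  have hf' : Integrable f' := by
    refine hf.bdd_mul (c := 1) ?_ (Filter.Eventually.of_forall fun s => (hE s).le)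
    exact (by fun_prop : Continuous E).aestronglyMeasurable
  have hn : ∀ s, ‖f' s‖ = ‖f s‖ := fun s => by simp [f', hE]
  have hF : 𝓕 f ξ = ∫ s, f' s := by
    rw [Real.fourier_eq']
    apply integral_congr_ae
    refine Filter.Eventually.of_forall fun s => ?_
    simp only [RCLike.inner_apply, conj_trivial, smul_eq_mul, f', E]
    push_cast
    ring_nf
  have hb := diff_bound hf' hV e
  simp only [hn] at hb
  refine le_trans (le_of_eq ?_) hb
  have hsub := Measure.integral_comp_mul_left (fun t : ℝ => ‖∫ s, f' s * (V (t - e * s) - V t)‖) e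
  rw [abs_of_pos (by positivity), eq_comm, inv_smul_eq_iff₀ he.ne', ← integral_smul] at hsub
  rw [hsub]
  -- for almost every t the integrand is integrable
  have hae : ∀ᵐ t : ℝ, Integrable (fun s => f s * W (t - s)) := by
    have := hf.ae_convolution_exists (ContinuousLinearMap.mul ℂ ℂ) hWi
    filter_upwards [this] with t ht
    simpa [ConvolutionExistsAt] using ht
  apply integral_congr_ae
  filter_upwards [hae] with t ht
  have h1 : ∫ s, f (t - s) * W s = ∫ s, f s * W (t - s) := by
    have := congrFun (conv_comm f W) t
    rw [this]; simp [mul_comm]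
  rw [h1, hF, ← integral_mul_const, ← integral_sub ht (hf'.mul_const _)]
  have h2 : ∀ s, f s * W (t - s) - f' s * W t =
      (e * Complex.exp (2 * Real.pi * Complex.I * ξ * t)) *
        (f' s * (V (e * t - e * s) - V (e * t))) := by
    intro s
    rw [hW, hW]
    have : Complex.exp (2 * Real.pi * Complex.I * ξ * ↑(t - s)) =
        Complex.exp (2 * Real.pi * Complex.I * ξ * t) * E s := by
      simp only [E]
      rw [← Complex.exp_add]
      congr 1
      push_cast; ring
    rw [this, mul_sub e]
    simp only [f']
    ring
  simp only [h2]
  rw [integral_const_mul, norm_mul, norm_mul]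
  have : ‖Complex.exp (2 * Real.pi * Complex.I * ξ * t)‖ = 1 := by
    rw [← Complex.norm_exp_ofReal_mul_I (2 * Real.pi * ξ * t)]
    congr 2
    push_cast; ring
  rw [this, Complex.norm_real, Real.norm_of_nonneg he.le]
  simp

theorem approx_est {f V : ℝ → ℂ} (hf : Integrable f) (hV : Integrable V) (h1 : ∫ t, V t = 1)
    (e : ℝ) (he : 0 < e) (W : ℝ → ℂ) (hW : ∀ t, W t = e * V (e * t)) :
    ∫ t, ‖(∫ s, f (t - s) * W s) - f t‖ ≤ ∫ s, ‖V s‖ * omg f (e⁻¹ * s) := by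
  refine le_trans (le_of_eq ?_) (diff_bound hV hf e⁻¹)
  have hWi : Integrable W := by
    have := (hV.comp_mul_left' he.ne').const_mul (e : ℂ)
    exact this.congr (Filter.Eventually.of_forall fun t => (hW t).symm)
  have hae : ∀ᵐ t : ℝ, Integrable (fun s => W s * f (t - s)) := by
    have := hWi.ae_convolution_exists (ContinuousLinearMap.mul ℂ ℂ) hf
    filter_upwards [this] with t ht
    simpa [ConvolutionExistsAt] using ht
  apply integral_congr_ae
  filter_upwards [hae] with t ht
  have h3 : Integrable (fun s => V s * f (t - e⁻¹ * s)) := by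
    have := (ht.comp_mul_left' (inv_ne_zero he.ne')).const_mul ((e : ℂ)⁻¹)
    refine this.congr (Filter.Eventually.of_forall fun s => ?_)
    simp only [hW, mul_inv_cancel_left₀ he.ne']
    have : (e : ℂ) ≠ 0 := by exact_mod_cast he.ne'
    field_simp
  simp only [mul_sub]
  rw [integral_sub h3 (hV.mul_const _), integral_mul_const, h1, one_mul]
  congr 2
  have := Measure.integral_comp_mul_left (fun s : ℝ => V s * f (t - e⁻¹ * s)) e
  rw [abs_of_pos (by positivity), eq_comm, inv_smul_eq_iff₀ he.ne', ← integral_smul] at this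
  rw [this]
  congr 1; ext s
  simp only [hW, inv_mul_cancel_left₀ he.ne', Complex.real_smul]
  ring

theorem fhat_eq (f : ℝ → ℂ) (ξ : ℝ) : fhat f (2 * Real.pi * ξ) = 𝓕 f ξ := by
  rw [Real.fourier_eq', fhat]
  congr 1; ext t
  simp only [RCLike.inner_apply, conj_trivial, smul_eq_mul]
  rw [mul_comm]
  congr 2
  push_cast; ring

theorem global_vanish {𝓧 : Type*} [AddCommGroup 𝓧] [Module ℂ 𝓧] (L : 𝓢(ℝ, ℂ) →ₗ[ℂ] 𝓧)
    (h : ∀ ξ : ℝ, ∃ e > 0, ∀ φ : 𝓢(ℝ, ℂ), (∀ y, y ∉ Metric.ball ξ e → φ y = 0) → L φ = 0)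
    (φ : 𝓢(ℝ, ℂ)) (hφ : HasCompactSupport φ) : L φ = 0 := by
  choose e he hL using h
  obtain ⟨ρ, hρ⟩ := SmoothPartitionOfUnity.exists_isSubordinate 𝓘(ℝ) (isClosed_univ (X := ℝ))
    (fun ξ => Metric.ball ξ (e ξ)) (fun _ => Metric.isOpen_ball)
    (fun ξ _ => Set.mem_iUnion.2 ⟨ξ, Metric.mem_ball_self (he ξ)⟩)
  have hfin := ρ.locallyFinite.finite_nonempty_inter_compact hφ
  have hs : ∀ i, HasCompactSupport (fun y => (ρ i y : ℂ) * φ y) := fun i => hφ.mul_left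
  have hd : ∀ i, ContDiff ℝ ∞ (fun y => (ρ i y : ℂ) * φ y) := fun i =>
    (Complex.ofRealCLM.contDiff.comp (ρ i).contMDiff.contDiff).mul (φ.smooth ⊤)
  let P : ℝ → 𝓢(ℝ, ℂ) := fun i => (hs i).toSchwartzMap (hd i)
  have hP : ∀ i y, P i y = (ρ i y : ℂ) * φ y := fun i y => rfl
  have hsum : φ = ∑ i ∈ hfin.toFinset, P i := by
    ext y
    rw [sum_apply]
    simp only [hP]
    rw [← Finset.sum_mul]
    by_cases hy : φ y = 0
    · simp [hy]
    · have h1 := ρ.sum_eq_one (Set.mem_univ y)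
      rw [finsum_eq_sum_of_support_subset (s := hfin.toFinset)] at h1
      · rw [← Complex.ofReal_sum, h1]; simp
      · intro i hi
        simp only [Set.Finite.coe_toFinset, Set.mem_ofPred_eq]
        exact ⟨y, hi, subset_tsupport _ hy⟩
  rw [hsum, map_sum]
  apply Finset.sum_eq_zero
  intro i _
  apply hL i
  intro y hy
  rw [hP]
  have : ρ i y = 0 := by
    by_contra hne
    exact hy (hρ i (subset_tsupport _ hne))
  simp [this]

/-- In a nondegenerate Banach `L¹(ℝ)`-module, an element with empty Beurling
spectrum is zero. -/
theorem stmt18 {𝓧 : Type*} [NormedAddCommGroup 𝓧] [NormedSpace ℂ 𝓧]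
    (act : (ℝ → ℂ) → 𝓧 → 𝓧)
    (hlin : ∀ f : ℝ → ℂ, Integrable f → IsLinearMap ℂ (act f))
    (hadd : ∀ f g : ℝ → ℂ, Integrable f → Integrable g → ∀ x : 𝓧,
      act (f + g) x = act f x + act g x)
    (hsmul : ∀ (c : ℂ) (f : ℝ → ℂ), Integrable f → ∀ x : 𝓧,
      act (c • f) x = c • act f x)
    (hconv : ∀ f g : ℝ → ℂ, Integrable f → Integrable g → ∀ x : 𝓧,
      act (fun t => ∫ s : ℝ, f (t - s) * g s) x = act f (act g x))
    (hnorm : ∀ f : ℝ → ℂ, Integrable f → ∀ x : 𝓧,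
      ‖act f x‖ ≤ (∫ t : ℝ, ‖f t‖) * ‖x‖)
    (hnondeg : ∀ x : 𝓧, (∀ f : ℝ → ℂ, Integrable f → act f x = 0) → x = 0)
    (x : 𝓧) (hx : BeurlingSpectrum act x = ∅) :
    x = 0 := by
  obtain ⟨V, hV, hV1, hchi⟩ := exists_chi
  have hcomm : ∀ f g : ℝ → ℂ, Integrable f → Integrable g → ∀ z : 𝓧,
      act f (act g z) = act g (act f z) := by
    intro f g hf hg z
    rw [← hconv f g hf hg, ← hconv g f hg hf, conv_comm]
  have hsub : ∀ f g : ℝ → ℂ, Integrable f → Integrable g → ∀ (c : ℂ) (z : 𝓧),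
      act (fun t => f t - c * g t) z = act f z - c • act g z := by
    intro f g hf hg c z
    have : (fun t => f t - c * g t) = f + (-c) • g := by
      ext t; simp [sub_eq_add_neg]
    rw [this, hadd f _ hf (hg.smul _), hsmul _ _ hg, neg_smul, sub_eq_add_neg]
  let L : 𝓢(ℝ, ℂ) →ₗ[ℂ] 𝓧 :=
    { toFun := fun φ => act (⇑(𝓕⁻ φ : 𝓢(ℝ, ℂ))) x
      map_add' := fun φ ψ => by
        rw [FourierTransform.fourierInv_add]
        exact hadd _ _ (𝓕⁻ φ).integrable (𝓕⁻ ψ).integrable x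
      map_smul' := fun c φ => by
        rw [FourierTransform.fourierInv_smul]
        exact hsmul _ _ (𝓕⁻ φ).integrable x }
  have hLdef : ∀ φ, L φ = act (⇑(𝓕⁻ φ : 𝓢(ℝ, ℂ))) x := fun φ => rfl
  have hloc : ∀ ξ : ℝ, ∃ e > 0, ∀ φ : 𝓢(ℝ, ℂ),
      (∀ y, y ∉ Metric.ball ξ e → φ y = 0) → L φ = 0 := by
    intro ξ
    have hm : (2 * Real.pi * ξ) ∉ BeurlingSpectrum act x := by rw [hx]; exact Set.notMem_empty _
    rw [BeurlingSpectrum, Set.notMem_compl_iff] at hm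
    obtain ⟨f, hf, hne, hfx⟩ := hm
    rw [fhat_eq] at hne
    have hlt := (omg_tendsto hf hV).eventually (gt_mem_nhds (norm_pos_iff.2 hne))
    obtain ⟨e, hlt, he⟩ := ((hlt.filter_mono nhdsWithin_le_nhds).and
      (self_mem_nhdsWithin (a := (0 : ℝ)) (s := Set.Ioi 0))).exists
    replace he : 0 < e := he
    refine ⟨e, he, fun φ hφ => ?_⟩
    obtain ⟨χ, -, hχ1, hχ⟩ := hchi ξ e he
    set y := L φ with hy
    have hg := (𝓕⁻ φ).integrable (μ := volume)
    have hW := (𝓕⁻ χ).integrable (μ := volume)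
    have hfy : act f y = 0 := by
      rw [hy, hLdef, hcomm _ _ hf hg, hfx]
      exact (hlin _ hg).map_zero
    have hWy : act (⇑(𝓕⁻ χ : 𝓢(ℝ, ℂ))) y = y := by
      rw [hy, hLdef, ← hconv _ _ hW hg]
      congr 1
      ext t
      apply conv_schwartz
      intro u
      by_cases hu : u ∈ Metric.ball ξ e
      · rw [hχ1 u hu, one_mul]
      · rw [hφ u hu, mul_zero]
    have h1 : act (fun t => (∫ s, f (t - s) * (𝓕⁻ χ) s) - 𝓕 f ξ * (𝓕⁻ χ) t) y = - (𝓕 f ξ • y) := by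
      rw [hsub _ _ (conv_int hf hW) hW, hconv _ _ hf hW, hWy, hfy, zero_sub]
    have h2 := hnorm _ ((conv_int hf hW).sub (hW.const_mul (𝓕 f ξ))) y
    have h2' : ‖𝓕 f ξ‖ * ‖y‖ ≤ (∫ t, ‖(∫ s, f (t - s) * (𝓕⁻ χ) s) - 𝓕 f ξ * (𝓕⁻ χ) t‖) * ‖y‖ := by
      rw [← norm_smul, ← norm_neg, ← h1]
      exact h2
    have h3 := local_est hf hV ξ e he _ hχ hW
    by_contra hyne
    have := le_of_mul_le_mul_right h2' (norm_pos_iff.2 hyne)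
    linarith
  have hglob := global_vanish L hloc
  apply hnondeg
  intro f hf
  rw [← norm_le_zero_iff]
  have hlim : Filter.Tendsto (fun e : ℝ => (∫ s, ‖V s‖ * omg f (e * s)) * ‖x‖) (𝓝[>] 0) (𝓝 0) := by
    simpa using ((omg_tendsto hV hf).mul_const ‖x‖).mono_left nhdsWithin_le_nhds
  refine ge_of_tendsto hlim ?_
  filter_upwards [self_mem_nhdsWithin] with d hd
  replace hd : 0 < d := hd
  obtain ⟨χ, hχc, -, hχ⟩ := hchi 0 d⁻¹ (inv_pos.2 hd)
  have hW := (𝓕⁻ χ).integrable (μ := volume)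
  have h0 : act (⇑(𝓕⁻ χ : 𝓢(ℝ, ℂ))) x = 0 := hglob χ hχc
  have h1 : act (fun t => (∫ s, f (t - s) * (𝓕⁻ χ) s) - 1 * f t) x = - act f x := by
    rw [hsub _ _ (conv_int hf hW) hf, hconv _ _ hf hW, h0, (hlin f hf).map_zero]
    simp
  have h2 := hnorm _ ((conv_int hf hW).sub (hf.const_mul 1)) x
  have h2' : ‖act f x‖ ≤ (∫ t, ‖(∫ s, f (t - s) * (𝓕⁻ χ) s) - 1 * f t‖) * ‖x‖ := by
    rw [← norm_neg, ← h1]; exact h2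
  refine h2'.trans (mul_le_mul_of_nonneg_right ?_ (norm_nonneg _))
  have h3 := approx_est hf hV hV1 d⁻¹ (inv_pos.2 hd) (⇑(𝓕⁻ χ : 𝓢(ℝ, ℂ))) (fun t => by rw [hχ]; simp)
  simpa only [inv_inv, one_mul] using h3
end
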